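/- On the open set D of admissible conservative states, the entropy function 𝓔(U) = −ρ ln(p∥ p⊥(U)²/ρ⁵) is differentiable, and its gradient with respect to U = (ρ, m_x, m_y, m_z, p∥, E, B_x, B_y, B_z, Ψ) equals the entropy variable vector V = (5 − s − β⊥|v|², 2β⊥v_x, 2β⊥v_y, 2β⊥v_z, β⊥ − β∥, −2β⊥, 2β⊥B_x, 2β⊥B_y, 2β⊥B_z, 2β⊥Ψ), where v = (m_x/ρ, m_y/ρ, m_z/ρ), β⊥ = ρ/p⊥(U), β∥ = ρ/p∥, and s = ln(p∥ p⊥(U)²/ρ⁵). -/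

import Mathlib

noncomputable section

/-- Perpendicular pressure recovered from the conservative GLM-CGL state
`U = (ρ, m_x, m_y, m_z, p∥, E, B_x, B_y, B_z, Ψ)`. -/
def pperpU (U : Fin 10 → ℝ) : ℝ :=
  (2 * U 5 - (U 1 ^ 2 + U 2 ^ 2 + U 3 ^ 2) / U 0
    - (U 6 ^ 2 + U 7 ^ 2 + U 8 ^ 2) - U 9 ^ 2 - U 4) / 2

/-- The set of admissible conservative states. -/
def admissD : Set (Fin 10 → ℝ) :=
  {U | 0 < U 0 ∧ 0 < U 4 ∧ 0 < pperpU U}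

/-- The entropy function `𝓔(U) = −ρ ln(p∥ p⊥(U)²/ρ⁵)`. -/
def entU (U : Fin 10 → ℝ) : ℝ :=
  -(U 0) * Real.log (U 4 * (pperpU U) ^ 2 / (U 0) ^ 5)

/-- The entropy variable vector `V(U)` expressed in conservative variables. -/
def entVarU (U : Fin 10 → ℝ) : Fin 10 → ℝ :=
  ![5 - Real.log (U 4 * (pperpU U) ^ 2 / (U 0) ^ 5)
      - (U 0 / pperpU U) * ((U 1 / U 0) ^ 2 + (U 2 / U 0) ^ 2 + (U 3 / U 0) ^ 2),
    2 * (U 0 / pperpU U) * (U 1 / U 0),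
    2 * (U 0 / pperpU U) * (U 2 / U 0),
    2 * (U 0 / pperpU U) * (U 3 / U 0),
    (U 0 / pperpU U) - (U 0 / U 4),
    -(2 * (U 0 / pperpU U)),
    2 * (U 0 / pperpU U) * U 6,
    2 * (U 0 / pperpU U) * U 7,
    2 * (U 0 / pperpU U) * U 8,
    2 * (U 0 / pperpU U) * U 9]

/-!
Write `s = ln (p∥ p⊥² / ρ⁵)`. Since `ds = dp∥ / p∥ + 2 dp⊥ / p⊥ - 5 dρ / ρ`, the entropy
`𝓔 = -ρ s` satisfies `d𝓔 = (5 - s) dρ - β∥ dp∥ - 2 β⊥ dp⊥`. Inserting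
`dp⊥ = |v|²/2 dρ - v · dm - dp∥/2 + dE - B · dB - Ψ dΨ` and collecting coefficients gives `V`.
-/

open Topology

section

variable {E : Type*} [NormedAddCommGroup E] [NormedSpace ℝ E]
  {p q r : E → ℝ} {p' q' r' : E →L[ℝ] ℝ} {x : E}

theorem hasFDerivAt_sq_div (hq : HasFDerivAt q q' x) (hr : HasFDerivAt r r' x) (hrx : r x ≠ 0) :
    HasFDerivAt (fun y => q y ^ 2 / r y) ((2 * (q x / r x)) • q' - (q x / r x) ^ 2 • r') x := by
  refine ((hq.pow 2).mul ((hasDerivAt_inv hrx).comp_hasFDerivAt x hr)).congr_fderiv ?_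
  ext w
  simp only [Function.comp_apply, nsmul_eq_mul, Nat.cast_ofNat, add_apply, smul_apply, sub_apply,
    smul_eq_mul, neg_smul, smul_neg, neg_apply, Nat.add_one_sub_one, pow_one]
  field_simp
  ring

theorem hasFDerivAt_log_mul_pow_div_pow (hp : HasFDerivAt p p' x) (hq : HasFDerivAt q q' x)
    (hr : HasFDerivAt r r' x) (hpx : p x ≠ 0) (hqx : q x ≠ 0) (hrx : r x ≠ 0) (m n : ℕ) :
    HasFDerivAt (fun y => Real.log (p y * q y ^ m / r y ^ n))
      ((p x)⁻¹ • p' + (m : ℝ) • (q x)⁻¹ • q' - (n : ℝ) • (r x)⁻¹ • r') x := by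
  have log_split : (fun y => Real.log (p y * q y ^ m / r y ^ n)) =ᶠ[𝓝 x]
      fun y => Real.log (p y) + m * Real.log (q y) - n * Real.log (r y) := by
    filter_upwards [hp.continuousAt.eventually_ne hpx, hq.continuousAt.eventually_ne hqx,
      hr.continuousAt.eventually_ne hrx] with y hpy hqy hry
    rw [Real.log_div (mul_ne_zero hpy (pow_ne_zero m hqy)) (pow_ne_zero n hry),
      Real.log_mul hpy (pow_ne_zero m hqy), Real.log_pow, Real.log_pow]
  exact (((hp.log hpx).add ((hq.log hqx).const_mul (m : ℝ))).sub
    ((hr.log hrx).const_mul (n : ℝ))).congr_of_eventuallyEq log_split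

theorem hasFDerivAt_neg_mul_log_mul_pow_div_pow (hp : HasFDerivAt p p' x)
    (hq : HasFDerivAt q q' x) (hr : HasFDerivAt r r' x) (hpx : p x ≠ 0) (hqx : q x ≠ 0)
    (hrx : r x ≠ 0) (m n : ℕ) :
    HasFDerivAt (fun y => -r y * Real.log (p y * q y ^ m / r y ^ n))
      ((n - Real.log (p x * q x ^ m / r x ^ n)) • r' - (r x / p x) • p'
        - (m * (r x / q x)) • q') x := by
  refine (hr.neg.mul
    (hasFDerivAt_log_mul_pow_div_pow hp hq hr hpx hqx hrx m n)).congr_fderiv ?_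
  ext w
  simp only [Pi.neg_apply, add_apply, sub_apply, neg_apply, smul_apply, smul_eq_mul]
  field_simp
  ring

end

/-- The gradient of the perpendicular pressure in conservative variables,
`(|v|²/2, −v, −1/2, 1, −B, −Ψ)` with `v = m/ρ`. -/
def pperpGradU (U : Fin 10 → ℝ) : Fin 10 → ℝ :=
  ![((U 1 / U 0) ^ 2 + (U 2 / U 0) ^ 2 + (U 3 / U 0) ^ 2) / 2,
    -(U 1 / U 0), -(U 2 / U 0), -(U 3 / U 0), -(1 / 2), 1, -U 6, -U 7, -U 8, -U 9]

theorem hasFDerivAt_pperpU {U : Fin 10 → ℝ} (hρ : U 0 ≠ 0) :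
    HasFDerivAt pperpU
      (∑ i : Fin 10,
        pperpGradU U i • (ContinuousLinearMap.proj i : (Fin 10 → ℝ) →L[ℝ] ℝ)) U := by
  have coord (i : Fin 10) : HasFDerivAt (fun W : Fin 10 → ℝ => W i)
      (ContinuousLinearMap.proj i : (Fin 10 → ℝ) →L[ℝ] ℝ) U := hasFDerivAt_apply i U
  have kinetic (i : Fin 10) := hasFDerivAt_sq_div (coord i) (coord 0) hρ
  have square (i : Fin 10) := (coord i).pow 2
  have pperp := ((((((coord 5).const_mul 2).sub
    (((kinetic 1).add (kinetic 2)).add (kinetic 3))).sub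
    (((square 6).add (square 7)).add (square 8))).sub (square 9)).sub (coord 4)).mul_const 2⁻¹
  refine (pperp.congr_fderiv ?_).congr_of_eventuallyEq (.of_forall fun W => ?_)
  · ext W
    simp only [pperpGradU, Fin.sum_univ_succ, Fin.isValue, Finset.univ_unique, Fin.default_eq_zero,
      Finset.sum_singleton, Fin.succ_zero_eq_one, Fin.succ_one_eq_two, Fin.reduceSucc,
      Matrix.cons_val_zero, Matrix.cons_val_succ, Matrix.cons_val_fin_one, add_apply, sub_apply,
      smul_apply, ContinuousLinearMap.proj_apply, smul_eq_mul, nsmul_eq_mul, Nat.cast_ofNat,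
      Nat.add_one_sub_one, pow_one]
    ring
  · simp only [pperpU, add_div, div_eq_mul_inv _ (2 : ℝ), Pi.add_apply, Pi.sub_apply]

theorem isOpen_admissD : IsOpen admissD := by
  have pperp_cont : ContinuousOn pperpU {U | 0 < U 0 ∧ 0 < U 4} := fun _ ⟨hρ, _⟩ =>
    (hasFDerivAt_pperpU hρ.ne').continuousAt.continuousWithinAt
  have open_pos : IsOpen {U : Fin 10 → ℝ | 0 < U 0 ∧ 0 < U 4} :=
    (isOpen_lt continuous_const (continuous_apply 0)).inter
      (isOpen_lt continuous_const (continuous_apply 4))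
  have admissD_eq : admissD = {U | 0 < U 0 ∧ 0 < U 4} ∩ pperpU ⁻¹' Set.Ioi 0 :=
    Set.ext fun _ => and_assoc.symm
  exact admissD_eq ▸ pperp_cont.isOpen_inter_preimage open_pos isOpen_Ioi

theorem sum_entVarU_smul_proj (U : Fin 10 → ℝ) :
    ∑ i : Fin 10, entVarU U i • (ContinuousLinearMap.proj i : (Fin 10 → ℝ) →L[ℝ] ℝ) =
      (5 - Real.log (U 4 * pperpU U ^ 2 / U 0 ^ 5)) • ContinuousLinearMap.proj 0
        - (U 0 / U 4) • ContinuousLinearMap.proj 4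
        - (2 * (U 0 / pperpU U)) • ∑ i : Fin 10, pperpGradU U i • ContinuousLinearMap.proj i := by
  ext W
  simp only [entVarU, pperpGradU, Fin.sum_univ_succ, Fin.isValue, Finset.univ_unique,
    Fin.default_eq_zero, Finset.sum_singleton, Fin.succ_zero_eq_one, Fin.succ_one_eq_two,
    Fin.reduceSucc, Matrix.cons_val_zero, Matrix.cons_val_succ, Matrix.cons_val_fin_one, add_apply,
    sub_apply, smul_apply, ContinuousLinearMap.proj_apply, smul_eq_mul]
  ring

theorem hasFDerivAt_entU {U : Fin 10 → ℝ} (hρ : U 0 ≠ 0) (hpar : U 4 ≠ 0)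
    (hperp : pperpU U ≠ 0) :
    HasFDerivAt entU
      (∑ i : Fin 10, entVarU U i • (ContinuousLinearMap.proj i : (Fin 10 → ℝ) →L[ℝ] ℝ)) U := by
  rw [sum_entVarU_smul_proj]
  exact mod_cast hasFDerivAt_neg_mul_log_mul_pow_div_pow (hasFDerivAt_apply 4 U)
    (hasFDerivAt_pperpU hρ) (hasFDerivAt_apply 0 U) hpar hperp hρ 2 5

/-- `D` is open, and on `D` the entropy `𝓔` is differentiable with
gradient (with respect to the conservative variables `U`) equal to the entropy
variable vector `V`. -/
theorem entropy_gradient_is_entropy_variable :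
    IsOpen admissD ∧
      ∀ U ∈ admissD,
        HasFDerivAt entU
          (∑ i : Fin 10,
            entVarU U i • (ContinuousLinearMap.proj i : (Fin 10 → ℝ) →L[ℝ] ℝ)) U := by
  refine ⟨isOpen_admissD, ?_⟩
  rintro U ⟨hρ, hpar, hperp⟩
  exact hasFDerivAt_entU hρ.ne' hpar.ne' hperp.ne'

end
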